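/- Under the system model with MRC, for every k ∈ {1,…,K}, E[v_{jk}(t)ᴴ h_{jjk}(t)] = E[‖v_{jk}(t)‖²] = N λ_{jjk}² · x̃_{jk}ᴴ D_{δ(t)} Ψ_j⁻¹ D_{δ(t)}ᴴ x̃_{jk}; in particular this expectation is real and nonnegative. -/

import Mathlib

open MeasureTheory ProbabilityTheory Matrix Complex
open scoped ProbabilityTheory Kronecker

/-- Deterministic phase-drift damping matrix
`D_{δ(t)} = diag(e^{−δ(t−1)/2}, …, e^{−δ(t−B)/2})`; the `b`-th diagonal entry
(`b : Fin B`, corresponding to pilot time `b+1`) is `e^{−δ(t−(b+1))/2}`. -/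
noncomputable def Dmat (δ : ℝ) (t B : ℕ) : Matrix (Fin B) (Fin B) ℂ :=
  Matrix.diagonal fun b => (Real.exp (-(δ / 2) * ((t : ℝ) - ((b : ℕ) + 1))) : ℂ)

/-- Deterministic pilot matrix `X_{ℓm}` built from the pilot sequence `xv`:
diagonal entries `|x(b)|²(1+κ²)` and off-diagonal entries `x(b₁)x(b₂)* e^{−δ|b₁−b₂|/2}`. -/
noncomputable def Xmat {B : ℕ} (κ δ : ℝ) (xv : Fin B → ℂ) : Matrix (Fin B) (Fin B) ℂ :=
  Matrix.of fun b₁ b₂ =>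
    if b₁ = b₂ then ((Complex.normSq (xv b₁) * (1 + κ ^ 2) : ℝ) : ℂ)
    else xv b₁ * star (xv b₂) * (Real.exp (-(δ / 2) * |((b₁ : ℕ) : ℝ) - ((b₂ : ℕ) : ℝ)|) : ℂ)

/-- Deterministic matrix `Ψ_j = Σ_ℓ Σ_m λ_{jℓm} X_{ℓm} + σ²ξ I_B`. -/
noncomputable def PsiMat {B L K : ℕ} (lam : Fin L → Fin K → ℝ) (σ2 ξ κ δ : ℝ)
    (x : Fin L → Fin K → Fin B → ℂ) : Matrix (Fin B) (Fin B) ℂ :=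
  (∑ l, ∑ m, ((lam l m : ℝ) : ℂ) • Xmat κ δ (x l m)) + ((σ2 * ξ : ℝ) : ℂ) • 1

/-- The uplink massive MIMO system model at base station `j`, on the probability space `Ω`,
with `N` antennas, pilot length `B`, `L` cells, `K` users per cell, channel attenuations
`lam l k = λ_{jlk}`, noise variance `σ2 = σ²`, noise amplification `ξ`, distortion parameter
`κ`, phase-drift variance `δ`, and deterministic pilot sequences `x l k : Fin B → ℂ`
(pilot time `b+1` for `b : Fin B`).  All underlying real random sources are mutually
independent: channel real/imaginary parts `hRe, hIm ~ N(0, λ_{jlk}/2)` (so the channel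
coefficients are `CN(0, λ_{jlk})`), phase-drift increments `dphi n u ~ N(0, δ)` (`u ≥ 1`),
distortion real/imaginary parts `zRe, zIm ~ N(0, 1/2)` (so `z ~ CN(0,1)`), and receiver-noise
real/imaginary parts `etaRe, etaIm ~ N(0, σ²ξ/2)` (so `η ~ CN(0, σ²ξ)`). -/
structure MIMOModel (Ω : Type*) [MeasureSpace Ω] (N B L K : ℕ)
    (lam : Fin L → Fin K → ℝ) (σ2 ξ κ δ : ℝ) (x : Fin L → Fin K → Fin B → ℂ) where
  hRe : Fin L → Fin K → Fin N → Ω → ℝ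
  hIm : Fin L → Fin K → Fin N → Ω → ℝ
  dphi : Fin N → ℕ → Ω → ℝ
  zRe : Fin N → ℕ → Ω → ℝ
  zIm : Fin N → ℕ → Ω → ℝ
  etaRe : Fin N → ℕ → Ω → ℝ
  etaIm : Fin N → ℕ → Ω → ℝ
  meas_hRe : ∀ l k n, Measurable (hRe l k n)
  meas_hIm : ∀ l k n, Measurable (hIm l k n)
  meas_dphi : ∀ n u, Measurable (dphi n u)
  meas_zRe : ∀ n s, Measurable (zRe n s)
  meas_zIm : ∀ n s, Measurable (zIm n s)
  meas_etaRe : ∀ n s, Measurable (etaRe n s)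
  meas_etaIm : ∀ n s, Measurable (etaIm n s)
  law_hRe : ∀ l k n, Measure.map (hRe l k n) ℙ = gaussianReal 0 (Real.toNNReal (lam l k / 2))
  law_hIm : ∀ l k n, Measure.map (hIm l k n) ℙ = gaussianReal 0 (Real.toNNReal (lam l k / 2))
  law_dphi : ∀ n u, Measure.map (dphi n u) ℙ = gaussianReal 0 (Real.toNNReal δ)
  law_zRe : ∀ n s, Measure.map (zRe n s) ℙ = gaussianReal 0 (Real.toNNReal (1 / 2))
  law_zIm : ∀ n s, Measure.map (zIm n s) ℙ = gaussianReal 0 (Real.toNNReal (1 / 2))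
  law_etaRe : ∀ n s, Measure.map (etaRe n s) ℙ = gaussianReal 0 (Real.toNNReal (σ2 * ξ / 2))
  law_etaIm : ∀ n s, Measure.map (etaIm n s) ℙ = gaussianReal 0 (Real.toNNReal (σ2 * ξ / 2))
  indep : iIndepFun (m := fun _ => (inferInstance : MeasurableSpace ℝ))
    (fun i : (Fin L × Fin K × Fin N × Bool) ⊕ (Fin N × ℕ) ⊕ (Fin N × ℕ × Bool) ⊕
        (Fin N × ℕ × Bool) =>
      match i with
      | Sum.inl (l, k, n, false) => hRe l k n
      | Sum.inl (l, k, n, true) => hIm l k n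
      | Sum.inr (Sum.inl (n, u)) => dphi n u
      | Sum.inr (Sum.inr (Sum.inl (n, s, false))) => zRe n s
      | Sum.inr (Sum.inr (Sum.inl (n, s, true))) => zIm n s
      | Sum.inr (Sum.inr (Sum.inr (n, s, false))) => etaRe n s
      | Sum.inr (Sum.inr (Sum.inr (n, s, true))) => etaIm n s) (ℙ : Measure Ω)

namespace MIMOModel

variable {Ω : Type*} [MeasureSpace Ω] {N B L K : ℕ} {lam : Fin L → Fin K → ℝ}
  {σ2 ξ κ δ : ℝ} {x : Fin L → Fin K → Fin B → ℂ}

variable (M : MIMOModel Ω N B L K lam σ2 ξ κ δ x)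

/-- Accumulated phase drift `φ_{jn}(s) = Σ_{u=1}^{s} Δ_{jn}(u)`. -/
noncomputable def phase (n : Fin N) (s : ℕ) (ω : Ω) : ℝ :=
  ∑ u ∈ Finset.Icc 1 s, M.dphi n u ω

/-- Channel coefficient `h_{jlk}^{(n)} ~ CN(0, λ_{jlk})`. -/
noncomputable def ch (l : Fin L) (k : Fin K) (n : Fin N) (ω : Ω) : ℂ :=
  Complex.mk (M.hRe l k n ω) (M.hIm l k n ω)

/-- Distortion variable `z_{jn}(s) ~ CN(0,1)`. -/
noncomputable def z (n : Fin N) (s : ℕ) (ω : Ω) : ℂ :=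
  Complex.mk (M.zRe n s ω) (M.zIm n s ω)

/-- Receiver noise `η_j^{(n)}(s) ~ CN(0, σ²ξ)`. -/
noncomputable def eta (n : Fin N) (s : ℕ) (ω : Ω) : ℂ :=
  Complex.mk (M.etaRe n s ω) (M.etaIm n s ω)

/-- Received pilot signal at antenna `n`, pilot time `b+1` (for `b : Fin B`):
`y_j^{(n)}(b) = e^{iφ_{jn}(b)} Σ_l Σ_m h_{jlm}^{(n)} x_{lm}(b)
  + κ (Σ_l Σ_m |x_{lm}(b)|² |h_{jlm}^{(n)}|²)^{1/2} z_{jn}(b) + η_j^{(n)}(b)`. -/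
noncomputable def y (n : Fin N) (b : Fin B) (ω : Ω) : ℂ :=
  Complex.exp (Complex.I * ((M.phase n ((b : ℕ) + 1) ω : ℝ) : ℂ))
      * ∑ l, ∑ m, M.ch l m n ω * x l m b
    + (κ : ℂ) * ((Real.sqrt (∑ l, ∑ m, Complex.normSq (x l m b)
        * Complex.normSq (M.ch l m n ω)) : ℝ) : ℂ) * M.z n ((b : ℕ) + 1) ω
    + M.eta n ((b : ℕ) + 1) ω

/-- Effective channel at time `t`: `h_{jlk}(t)` has `n`-th entry `e^{iφ_{jn}(t)} h_{jlk}^{(n)}`. -/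
noncomputable def hEff (l : Fin L) (k : Fin K) (t : ℕ) (n : Fin N) (ω : Ω) : ℂ :=
  Complex.exp (Complex.I * ((M.phase n t ω : ℝ) : ℂ)) * M.ch l k n ω

/-- LMMSE channel estimate `ĥ_{jlk}(t) = λ_{jlk} Σ_b c_b y_j(b)` with
`(c_1, …, c_B) = x̃_{lk}ᴴ D_{δ(t)} Ψ_j⁻¹`. -/
noncomputable def hHat (l : Fin L) (k : Fin K) (t : ℕ) (n : Fin N) (ω : Ω) : ℂ :=
  ((lam l k : ℝ) : ℂ) * ∑ b,
    Matrix.vecMul (star (x l k)) (Dmat δ t B * (PsiMat lam σ2 ξ κ δ x)⁻¹) b * M.y n b ω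

/-- Data-phase distortion noise `υ_j(t)` with `n`-th entry
`κ (Σ_l Σ_m p_{lm} |h_{jlm}^{(n)}|²)^{1/2} z_{jn}(t)`. -/
noncomputable def ups (p : Fin L → Fin K → ℝ) (t : ℕ) (n : Fin N) (ω : Ω) : ℂ :=
  (κ : ℂ) * ((Real.sqrt (∑ l, ∑ m, p l m * Complex.normSq (M.ch l m n ω)) : ℝ) : ℂ)
    * M.z n t ω

/-- The uplink SINR of user `k` in cell `j` at time `t` with the MRC filter
`v_{jk}(t) = ĥ_{jjk}(t)`. -/
noncomputable def SINR (p : Fin L → Fin K → ℝ) (j : Fin L) (k : Fin K) (t : ℕ) : ℝ :=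
  p j k * Complex.normSq (∫ ω, ∑ n, star (M.hHat j k t n ω) * M.hEff j k t n ω) /
    ((∑ l, ∑ m, p l m * ∫ ω, Complex.normSq (∑ n, star (M.hHat j k t n ω) * M.hEff l m t n ω))
      - p j k * Complex.normSq (∫ ω, ∑ n, star (M.hHat j k t n ω) * M.hEff j k t n ω)
      + (∫ ω, Complex.normSq (∑ n, star (M.hHat j k t n ω) * M.ups p t n ω))
      + σ2 * ξ * ∫ ω, ∑ n, Complex.normSq (M.hHat j k t n ω))

end MIMOModel

set_option linter.unusedSectionVars false
set_option linter.unusedVariables false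

namespace MIMOModel

section aux

variable {Ω : Type*} [MeasureSpace Ω] {N B L K : ℕ} {lam : Fin L → Fin K → ℝ}
  {σ2 ξ κ δ : ℝ} {x : Fin L → Fin K → Fin B → ℂ}

abbrev Idx (N L K : ℕ) := (Fin L × Fin K × Fin N × Bool) ⊕ (Fin N × ℕ) ⊕ (Fin N × ℕ × Bool) ⊕
        (Fin N × ℕ × Bool)

variable (M : MIMOModel Ω N B L K lam σ2 ξ κ δ x)

def fam (i : Idx N L K) : Ω → ℝ :=
      match i with
      | Sum.inl (l, k, n, false) => M.hRe l k n
      | Sum.inl (l, k, n, true) => M.hIm l k n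
      | Sum.inr (Sum.inl (n, u)) => M.dphi n u
      | Sum.inr (Sum.inr (Sum.inl (n, s, false))) => M.zRe n s
      | Sum.inr (Sum.inr (Sum.inl (n, s, true))) => M.zIm n s
      | Sum.inr (Sum.inr (Sum.inr (n, s, false))) => M.etaRe n s
      | Sum.inr (Sum.inr (Sum.inr (n, s, true))) => M.etaIm n s

lemma fam_indep : iIndepFun M.fam (ℙ : Measure Ω) := M.indep

lemma fam_meas (i) : Measurable (M.fam i) := by
  rcases i with ⟨l, k, n, _ | _⟩ | ⟨n, u⟩ | ⟨n, s, _ | _⟩ | ⟨n, s, _ | _⟩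
  · exact M.meas_hRe l k n
  · exact M.meas_hIm l k n
  · exact M.meas_dphi n u
  · exact M.meas_zRe n s
  · exact M.meas_zIm n s
  · exact M.meas_etaRe n s
  · exact M.meas_etaIm n s

/-- sigma algebra generated by a subfamily -/
@[reducible] def sg (S : Set (Idx N L K)) : MeasurableSpace Ω :=
  ⨆ i ∈ S, MeasurableSpace.comap (M.fam i) inferInstance

lemma sg_le (S : Set (Idx N L K)) : M.sg S ≤ (inferInstance : MeasurableSpace Ω) :=
  iSup₂_le fun i _ => (M.fam_meas i).comap_le

lemma fam_sg {S : Set (Idx N L K)} {i} (hi : i ∈ S) : Measurable[M.sg S] (M.fam i) := by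
  rw [measurable_iff_comap_le]
  exact le_iSup₂ (f := fun i (_ : i ∈ S) => MeasurableSpace.comap (M.fam i) inferInstance) i hi

lemma indep_compl (S : Set (Idx N L K)) {f g : Ω → ℂ} (hf : Measurable[M.sg S] f)
    (hg : Measurable[M.sg Sᶜ] g) : IndepFun f g (ℙ : Measure Ω) := by
  rw [IndepFun_iff_Indep]
  have h := indep_iSup_of_disjoint (fun i => (M.fam_meas i).comap_le)
    ((iIndepFun_iff_iIndep _ _ _).1 M.fam_indep) (disjoint_compl_right (a := S))
  exact indep_of_indep_of_le_left (indep_of_indep_of_le_right h hg.comap_le) hf.comap_le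

lemma int_mul (S : Set (Idx N L K)) {f g : Ω → ℂ} (hf : Measurable[M.sg S] f)
    (hg : Measurable[M.sg Sᶜ] g) : ∫ ω, f ω * g ω = (∫ ω, f ω) * ∫ ω, g ω :=
  (M.indep_compl S hf hg).integral_fun_mul_eq_mul_integral
    (hf.mono (M.sg_le S) le_rfl).aestronglyMeasurable
    (hg.mono (M.sg_le _) le_rfl).aestronglyMeasurable

lemma mk_eq (a b : ℝ) : Complex.mk a b = (a : ℂ) + b * Complex.I := Complex.mk_eq_add_mul_I a b

lemma meas_mk {m : MeasurableSpace Ω} {f g : Ω → ℝ} (hf : Measurable[m] f) (hg : Measurable[m] g) :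
    Measurable[m] (fun ω => Complex.mk (f ω) (g ω)) := by
  simp only [mk_eq]
  exact (Complex.measurable_ofReal.comp hf).add
    ((Complex.measurable_ofReal.comp hg).mul measurable_const)

lemma ch_sg {S : Set (Idx N L K)} {l k n} (h1 : Sum.inl (l, k, n, false) ∈ S)
    (h2 : Sum.inl (l, k, n, true) ∈ S) : Measurable[M.sg S] (M.ch l k n) :=
  meas_mk (M.fam_sg h1) (M.fam_sg h2)

lemma z_sg {S : Set (Idx N L K)} {n s} (h1 : Sum.inr (Sum.inr (Sum.inl (n, s, false))) ∈ S)
    (h2 : Sum.inr (Sum.inr (Sum.inl (n, s, true))) ∈ S) : Measurable[M.sg S] (M.z n s) :=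
  meas_mk (M.fam_sg h1) (M.fam_sg h2)

lemma eta_sg {S : Set (Idx N L K)} {n s} (h1 : Sum.inr (Sum.inr (Sum.inr (n, s, false))) ∈ S)
    (h2 : Sum.inr (Sum.inr (Sum.inr (n, s, true))) ∈ S) : Measurable[M.sg S] (M.eta n s) :=
  meas_mk (M.fam_sg h1) (M.fam_sg h2)

/-- phase factor -/
noncomputable def ph (n : Fin N) (s : ℕ) (ω : Ω) : ℂ :=
  Complex.exp (Complex.I * ((M.phase n s ω : ℝ) : ℂ))

lemma ph_sg' {S : Set (Idx N L K)} {n s} (h : ∀ u, u ≤ s → Sum.inr (Sum.inl (n, u)) ∈ S) :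
    Measurable[M.sg S] (M.ph n s) := by
  have : Measurable[M.sg S] (M.phase n s) :=
    Finset.measurable_sum _ fun u hu => M.fam_sg (h u (Finset.mem_Icc.1 hu).2)
  exact Complex.measurable_exp.comp (measurable_const.mul (Complex.measurable_ofReal.comp this))

lemma ph_sg {S : Set (Idx N L K)} {n s} (h : ∀ p, Sum.inr (Sum.inl p) ∈ S) :
    Measurable[M.sg S] (M.ph n s) := M.ph_sg' fun _ _ => h _

/-- noiseless received sum -/
noncomputable def U (n : Fin N) (b : Fin B) (ω : Ω) : ℂ := ∑ l, ∑ m, M.ch l m n ω * x l m b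

/-- distortion amplitude -/
noncomputable def R (n : Fin N) (b : Fin B) (ω : Ω) : ℝ :=
  Real.sqrt (∑ l, ∑ m, Complex.normSq (x l m b) * Complex.normSq (M.ch l m n ω))

def Hs : Set (Idx N L K) := {i | ∃ p, i = Sum.inl p}

lemma ch_sg' {S : Set (Idx N L K)} (h : ∀ p, Sum.inl p ∈ S) {l k n} :
   Measurable[M.sg S] (M.ch l k n) := M.ch_sg (h _) (h _)

lemma U_sg {S : Set (Idx N L K)} (h : ∀ p, Sum.inl p ∈ S) {n b} :
    Measurable[M.sg S] (M.U n b) :=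
  Finset.measurable_sum _ fun l _ => Finset.measurable_sum _ fun m _ =>
    (M.ch_sg' h).mul measurable_const

lemma R_sg {S : Set (Idx N L K)} (h : ∀ p, Sum.inl p ∈ S) {n b} :
    Measurable[M.sg S] (M.R n b) :=
  Real.continuous_sqrt.measurable.comp
   (Finset.measurable_sum _ fun l _ => Finset.measurable_sum _ fun m _ =>
    measurable_const.mul (Complex.continuous_normSq.measurable.comp (M.ch_sg' h)))

lemma star_m {m : MeasurableSpace Ω} {f : Ω → ℂ} (hf : Measurable[m] f) :
    Measurable[m] (fun ω => star (f ω)) := continuous_star.measurable.comp hf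

lemma ofReal_m {m : MeasurableSpace Ω} {f : Ω → ℝ} (hf : Measurable[m] f) :
    Measurable[m] (fun ω => (f ω : ℂ)) := Complex.measurable_ofReal.comp hf

lemma y_eq (n : Fin N) (b : Fin B) (ω : Ω) : M.y n b ω =
    M.ph n (b + 1) ω * M.U n b ω + κ * (M.R n b ω : ℂ) * M.z n (b+1) ω + M.eta n (b+1) ω := rfl

lemma ph_star (n : Fin N) (s : ℕ) (ω : Ω) : M.ph n s ω * star (M.ph n s ω) = 1 := by
  simp only [ph, Complex.star_def]
  rw [← Complex.exp_conj, ← Complex.exp_add]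
  simp

lemma ph_norm (n : Fin N) (s : ℕ) (ω : Ω) : ‖M.ph n s ω‖ = 1 := by
  simp only [ph, mul_comm Complex.I]
  exact Complex.norm_exp_ofReal_mul_I _

end aux

section gauss

variable {Ω : Type*} [MeasureSpace Ω] [IsProbabilityMeasure (ℙ : Measure Ω)]

lemma g_memLp {X : Ω → ℝ} (hX : Measurable X) {v : NNReal}
    (h : Measure.map X ℙ = gaussianReal 0 v) : MemLp X 2 (ℙ : Measure Ω) := by
  have := (memLp_id_gaussianReal (μ := 0) (v := v) 2)
  rw [← h] at this
  exact (memLp_map_measure_iff (g := id) (f := X) measurable_id.aestronglyMeasurable hX.aemeasurable).1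
    (by simpa using this)

lemma g_mean {X : Ω → ℝ} (hX : Measurable X) {v : NNReal}
    (h : Measure.map X ℙ = gaussianReal 0 v) : ∫ ω, X ω = 0 := by
  have := integral_id_gaussianReal (μ := 0) (v := v)
  rw [← h, integral_map hX.aemeasurable (by fun_prop)] at this
  exact this

lemma g_sq {X : Ω → ℝ} (hX : Measurable X) {v : NNReal}
    (h : Measure.map X ℙ = gaussianReal 0 v) : ∫ ω, X ω ^ 2 = v := by
  have := variance_fun_id_gaussianReal (μ := 0) (v := v)
  rw [variance_eq_integral (by fun_prop), integral_id_gaussianReal,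
    ← h, integral_map hX.aemeasurable (by fun_prop)] at this
  simpa using this

lemma g_char {X : Ω → ℝ} (hX : Measurable X) {v : NNReal}
    (h : Measure.map X ℙ = gaussianReal 0 v) :
    ∫ ω, Complex.exp (Complex.I * X ω) = (Real.exp (-(v / 2)) : ℂ) := by
  have := charFun_gaussianReal (μ := 0) (v := v) 1
  rw [← h, charFun_apply_real, integral_map hX.aemeasurable (by fun_prop)] at this
  simp only [Complex.ofReal_one, one_mul, mul_comm _ Complex.I] at this
  rw [this]
  push_cast
  congr 1
  simp

lemma c_memLp {X Y : Ω → ℝ} (hX : MemLp X 2 (ℙ : Measure Ω)) (hY : MemLp Y 2 (ℙ : Measure Ω)) :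
    MemLp (fun ω => Complex.mk (X ω) (Y ω)) 2 (ℙ : Measure Ω) := by
  simp only [mk_eq]
  have h1 : MemLp (fun ω => (X ω : ℂ)) 2 (ℙ : Measure Ω) := hX.ofReal
  have h2 : MemLp (fun ω => (Y ω : ℂ)) 2 (ℙ : Measure Ω) := hY.ofReal
  exact h1.add (h2.mul_const Complex.I)

lemma c_mean {X Y : Ω → ℝ} (hX : MemLp X 2 (ℙ : Measure Ω)) (hY : MemLp Y 2 (ℙ : Measure Ω))
    (hX0 : ∫ ω, X ω = 0) (hY0 : ∫ ω, Y ω = 0) :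
    ∫ ω, Complex.mk (X ω) (Y ω) = 0 := by
  simp only [mk_eq]
  have i1 : Integrable (fun ω => (X ω : ℂ)) := (hX.integrable (by norm_num)).ofReal
  have i2 : Integrable (fun ω => (Y ω : ℂ)) := (hY.integrable (by norm_num)).ofReal
  rw [integral_add i1 (i2.mul_const _), integral_mul_const, integral_complex_ofReal,
    integral_complex_ofReal, hX0, hY0]
  simp

lemma c_sq {X Y : Ω → ℝ} (hX : MemLp X 2 (ℙ : Measure Ω)) (hY : MemLp Y 2 (ℙ : Measure Ω))
    {v w : ℝ} (hX0 : ∫ ω, X ω ^ 2 = v) (hY0 : ∫ ω, Y ω ^ 2 = w) :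
    ∫ ω, Complex.normSq (Complex.mk (X ω) (Y ω)) = v + w := by
  simp only [Complex.normSq_mk, ← pow_two]
  rw [integral_add hX.integrable_sq hY.integrable_sq, hX0, hY0]

end gauss
end MIMOModel

namespace MIMOModel

section moments

variable {Ω : Type*} [MeasureSpace Ω] [IsProbabilityMeasure (ℙ : Measure Ω)]
  {N B L K : ℕ} {lam : Fin L → Fin K → ℝ}
  {σ2 ξ κ δ : ℝ} {x : Fin L → Fin K → Fin B → ℂ}

variable (M : MIMOModel Ω N B L K lam σ2 ξ κ δ x)

lemma ph_step (hδ : 0 ≤ δ) (n : Fin N) (s d : ℕ) :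
    ∫ ω, M.ph n (s + d) ω * star (M.ph n s ω) = (Real.exp (-(δ / 2) * d) : ℂ) := by
  induction d with
  | zero => simp only [add_zero, ph_star]; simp
  | succ d ih =>
    have e : ∀ ω, M.ph n (s + (d + 1)) ω * star (M.ph n s ω) =
        Complex.exp (Complex.I * M.dphi n (s + d + 1) ω) *
          (M.ph n (s + d) ω * star (M.ph n s ω)) := by
      intro ω
      rw [← mul_assoc]
      congr 1
      simp only [ph, phase]
      rw [← Complex.exp_add, ← add_assoc, Finset.sum_Icc_succ_top (by omega)]
      congr 1
      push_cast
      ring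
    simp only [e]
    rw [M.int_mul {Sum.inr (Sum.inl (n, s + d + 1))}, ih,
      g_char (M.meas_dphi n _) (M.law_dphi n _), Real.coe_toNNReal _ hδ]
    · rw [← Complex.ofReal_mul, ← Real.exp_add]
      push_cast
      ring_nf
    · exact Complex.measurable_exp.comp (measurable_const.mul (Complex.measurable_ofReal.comp
        (M.fam_sg (i := Sum.inr (Sum.inl (n, s + d + 1))) (by simp))))
    · exact (M.ph_sg' (by intro u hu; simp; omega)).mul
        (star_m (M.ph_sg' (by intro u hu; simp; omega)))

lemma ph_cov (hδ : 0 ≤ δ) (n : Fin N) (a b : ℕ) :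
    ∫ ω, M.ph n a ω * star (M.ph n b ω) = (Real.exp (-(δ / 2) * |(a : ℝ) - b|) : ℂ) := by
  rcases le_total b a with h | h
  · obtain ⟨d, rfl⟩ := Nat.exists_eq_add_of_le h
    rw [M.ph_step hδ]
    simp
  · obtain ⟨d, rfl⟩ := Nat.exists_eq_add_of_le h
    have h1 := M.ph_step hδ n a d
    have h2 : ∀ ω, M.ph n a ω * star (M.ph n (a + d) ω) =
       (starRingEnd ℂ) (M.ph n (a + d) ω * star (M.ph n a ω)) := by
      intro ω; simp [mul_comm]
    simp only [h2]
    rw [integral_conj, h1, Complex.conj_ofReal]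
    simp

lemma ch_memLp (l k n) : MemLp (M.ch l k n) 2 (ℙ : Measure Ω) :=
  c_memLp (g_memLp (M.meas_hRe l k n) (M.law_hRe l k n)) (g_memLp (M.meas_hIm l k n) (M.law_hIm l k n))

lemma z_memLp (n s) : MemLp (M.z n s) 2 (ℙ : Measure Ω) :=
  c_memLp (g_memLp (M.meas_zRe n s) (M.law_zRe n s)) (g_memLp (M.meas_zIm n s) (M.law_zIm n s))

lemma eta_memLp (n s) : MemLp (M.eta n s) 2 (ℙ : Measure Ω) :=
  c_memLp (g_memLp (M.meas_etaRe n s) (M.law_etaRe n s))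
    (g_memLp (M.meas_etaIm n s) (M.law_etaIm n s))

lemma ch_mean (l k n) : ∫ ω, M.ch l k n ω = 0 :=
  c_mean (g_memLp (M.meas_hRe l k n) (M.law_hRe l k n)) (g_memLp (M.meas_hIm l k n) (M.law_hIm l k n))
   (g_mean (M.meas_hRe l k n) (M.law_hRe l k n)) (g_mean (M.meas_hIm l k n) (M.law_hIm l k n))

lemma z_mean (n s) : ∫ ω, M.z n s ω = 0 :=
  c_mean (g_memLp (M.meas_zRe n s) (M.law_zRe n s)) (g_memLp (M.meas_zIm n s) (M.law_zIm n s))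
   (g_mean (M.meas_zRe n s) (M.law_zRe n s)) (g_mean (M.meas_zIm n s) (M.law_zIm n s))

lemma eta_mean (n s) : ∫ ω, M.eta n s ω = 0 :=
  c_mean (g_memLp (M.meas_etaRe n s) (M.law_etaRe n s)) (g_memLp (M.meas_etaIm n s) (M.law_etaIm n s))
   (g_mean (M.meas_etaRe n s) (M.law_etaRe n s)) (g_mean (M.meas_etaIm n s) (M.law_etaIm n s))

lemma ch_sq (hlam : ∀ l k, 0 < lam l k) (l k n) :
    ∫ ω, Complex.normSq (M.ch l k n ω) = lam l k := by
  refine (c_sq (g_memLp (M.meas_hRe l k n) (M.law_hRe l k n))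
    (g_memLp (M.meas_hIm l k n) (M.law_hIm l k n))
    (g_sq (M.meas_hRe l k n) (M.law_hRe l k n)) (g_sq (M.meas_hIm l k n) (M.law_hIm l k n))).trans ?_
  rw [Real.coe_toNNReal _ (by linarith [hlam l k])]
  ring

lemma z_sq (n s) : ∫ ω, Complex.normSq (M.z n s ω) = 1 := by
  refine (c_sq (g_memLp (M.meas_zRe n s) (M.law_zRe n s)) (g_memLp (M.meas_zIm n s) (M.law_zIm n s))
   (g_sq (M.meas_zRe n s) (M.law_zRe n s)) (g_sq (M.meas_zIm n s) (M.law_zIm n s))).trans ?_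
  rw [Real.coe_toNNReal _ (by norm_num)]
  ring

lemma eta_sq (h : 0 ≤ σ2 * ξ) (n s) : ∫ ω, Complex.normSq (M.eta n s ω) = σ2 * ξ := by
  refine (c_sq (g_memLp (M.meas_etaRe n s) (M.law_etaRe n s)) (g_memLp (M.meas_etaIm n s) (M.law_etaIm n s))
   (g_sq (M.meas_etaRe n s) (M.law_etaRe n s)) (g_sq (M.meas_etaIm n s) (M.law_etaIm n s))).trans ?_
  rw [Real.coe_toNNReal _ (by linarith)]
  ring

lemma mul_star_eq (c : ℂ) : c * star c = (Complex.normSq c : ℂ) := Complex.mul_conj c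

lemma int_star (f : Ω → ℂ) : ∫ ω, star (f ω) = star (∫ ω, f ω) := integral_conj

lemma ch_cov (hlam : ∀ l k, 0 < lam l k) (l k l' k' n) :
    ∫ ω, M.ch l k n ω * star (M.ch l' k' n ω) = if l = l' ∧ k = k' then (lam l k : ℂ) else 0 := by
  split_ifs with h
  · obtain ⟨rfl, rfl⟩ := h
    simp only [mul_star_eq]
    rw [integral_complex_ofReal, M.ch_sq hlam]
  · rw [M.int_mul {Sum.inl (l, k, n, false), Sum.inl (l, k, n, true)}, ch_mean, zero_mul]
    · exact M.ch_sg (by simp) (by simp)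
    · exact star_m (M.ch_sg (by simp; tauto) (by simp; tauto))

lemma z_cov (n s s') :
    ∫ ω, M.z n s ω * star (M.z n s' ω) = if s = s' then 1 else 0 := by
  split_ifs with h
  · obtain rfl := h
    simp only [mul_star_eq]
    rw [integral_complex_ofReal, M.z_sq, Complex.ofReal_one]
  · rw [M.int_mul {Sum.inr (Sum.inr (Sum.inl (n, s, false))), Sum.inr (Sum.inr (Sum.inl (n, s, true)))},
      z_mean, zero_mul]
    · exact M.z_sg (by simp) (by simp)
    · exact star_m (M.z_sg (by simp; tauto) (by simp; tauto))

lemma eta_cov (h : 0 ≤ σ2 * ξ) (n s s') :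
    ∫ ω, M.eta n s ω * star (M.eta n s' ω) = if s = s' then ((σ2 * ξ : ℝ) : ℂ) else 0 := by
  split_ifs with h
  · obtain rfl := h
    simp only [mul_star_eq]
    rw [integral_complex_ofReal, M.eta_sq ‹_›]
  · rw [M.int_mul {Sum.inr (Sum.inr (Sum.inr (n, s, false))), Sum.inr (Sum.inr (Sum.inr (n, s, true)))},
      eta_mean, zero_mul]
    · exact M.eta_sg (by simp) (by simp)
    · exact star_m (M.eta_sg (by simp; tauto) (by simp; tauto))

lemma l2_int {f g : Ω → ℂ} (hf : MemLp f 2 (ℙ : Measure Ω)) (hg : MemLp g 2 (ℙ : Measure Ω)) :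
    Integrable (fun ω => f ω * star (g ω)) :=
  hf.integrable_mul (q := 2) hg.star

lemma normSq_int {f : Ω → ℂ} (hf : MemLp f 2 (ℙ : Measure Ω)) :
    Integrable (fun ω => Complex.normSq (f ω)) := by
  simp only [Complex.normSq_eq_norm_sq]
  exact (memLp_two_iff_integrable_sq_norm hf.1).1 hf

lemma ph_mul_memLp {f : Ω → ℂ} (hf : MemLp f 2 (ℙ : Measure Ω)) (n s) :
    MemLp (fun ω => M.ph n s ω * f ω) 2 (ℙ : Measure Ω) := by
  have hm : AEStronglyMeasurable (M.ph n s) (ℙ : Measure Ω) :=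
    ((M.ph_sg (S := Set.univ) (by simp)).mono (M.sg_le _) le_rfl).aestronglyMeasurable
  refine hf.of_le (hm.mul hf.1) (Filter.Eventually.of_forall fun ω => ?_)
  rw [norm_mul, ph_norm, one_mul]

lemma U_memLp (n b) : MemLp (M.U n b) 2 (ℙ : Measure Ω) := by
  unfold U
  exact memLp_finsetSum _ fun l _ => memLp_finsetSum _ fun m _ => (M.ch_memLp l m n).mul_const _

lemma RR (n b) (ω : Ω) : M.R n b ω * M.R n b ω =
    ∑ l, ∑ m, Complex.normSq (x l m b) * Complex.normSq (M.ch l m n ω) :=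
  Real.mul_self_sqrt (Finset.sum_nonneg fun _ _ => Finset.sum_nonneg fun _ _ =>
    mul_nonneg (Complex.normSq_nonneg _) (Complex.normSq_nonneg _))

lemma RR_int (n b) : Integrable (fun ω => M.R n b ω * M.R n b ω) := by
  simp only [RR]
  exact integrable_finsetSum _ fun l _ => integrable_finsetSum _ fun m _ =>
    (normSq_int (M.ch_memLp l m n)).const_mul _

lemma RR_mean (hlam : ∀ l k, 0 < lam l k) (n b) : ∫ ω, M.R n b ω * M.R n b ω =
    ∑ l, ∑ m, Complex.normSq (x l m b) * lam l m := by
  simp only [RR]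
  rw [integral_finsetSum _ fun l _ => integrable_finsetSum _ fun m _ =>
    (normSq_int (M.ch_memLp l m n)).const_mul _]
  congr! 2 with l
  rw [integral_finsetSum _ fun m _ => (normSq_int (M.ch_memLp l m n)).const_mul _]
  congr! 2 with m
  rw [integral_const_mul, M.ch_sq hlam]

lemma Rz_memLp (n b s) : MemLp (fun ω => (κ : ℂ) * (M.R n b ω : ℂ) * M.z n s ω) 2 (ℙ : Measure Ω) := by
  have mR : Measurable[M.sg Hs] (M.R n b) := M.R_sg (by simp [Hs])
  have mz : Measurable[M.sg Hsᶜ] (M.z n s) := M.z_sg (by simp [Hs]) (by simp [Hs])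
  have m1 := (ofReal_m mR).mono (M.sg_le _) le_rfl
  have m2 := mz.mono (M.sg_le _) le_rfl
  have : MemLp (fun ω => (M.R n b ω : ℂ) * M.z n s ω) 2 (ℙ : Measure Ω) := by
    refine (memLp_two_iff_integrable_sq_norm (m1.mul m2).aestronglyMeasurable).2 ?_
    have hi := (M.indep_compl Hs (f := fun ω => ((M.R n b ω * M.R n b ω : ℝ) : ℂ))
      (g := fun ω => M.z n s ω * star (M.z n s ω)) (ofReal_m (mR.mul mR))
      (mz.mul (star_m mz))).integrable_mul (M.RR_int n b).ofReal (l2_int (M.z_memLp n s) (M.z_memLp n s))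
    refine hi.norm.congr (Filter.Eventually.of_forall fun ω => ?_)
    simp only [Pi.mul_apply, norm_mul, norm_star, Complex.norm_real]
    ring
  simpa [mul_assoc] using this.const_mul (κ : ℂ)

lemma chU (hlam : ∀ l k, 0 < lam l k) (l k n b) :
    ∫ ω, M.ch l k n ω * star (M.U n b ω) = lam l k * star (x l k b) := by
  have e : ∀ ω, M.ch l k n ω * star (M.U n b ω) =
      ∑ l', ∑ m', star (x l' m' b) * (M.ch l k n ω * star (M.ch l' m' n ω)) := by
    intro ω
    simp only [U, star_sum, star_mul, Finset.mul_sum]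
    congr! 2
    ring
  simp only [e]
  rw [integral_finsetSum _ fun l' _ => integrable_finsetSum _ fun m' _ =>
    (l2_int (M.ch_memLp l k n) (M.ch_memLp l' m' n)).const_mul _]
  rw [Finset.sum_eq_single l]
  · rw [integral_finsetSum _ fun m' _ =>
      (l2_int (M.ch_memLp l k n) (M.ch_memLp l m' n)).const_mul _]
    rw [Finset.sum_eq_single k]
    · rw [integral_const_mul, M.ch_cov hlam]; simp [mul_comm]
    · intro m' _ hm
      rw [integral_const_mul, M.ch_cov hlam]; simp [hm.symm]
    · simp
  · intro l' _ hl
    rw [integral_finsetSum _ fun m' _ =>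
      (l2_int (M.ch_memLp l k n) (M.ch_memLp l' m' n)).const_mul _]
    refine Finset.sum_eq_zero fun m' _ => ?_
    rw [integral_const_mul, M.ch_cov hlam]; simp [hl.symm]
  · simp

lemma UU (hlam : ∀ l k, 0 < lam l k) (n b b') :
    ∫ ω, M.U n b ω * star (M.U n b' ω) = ∑ l, ∑ m, lam l m * (x l m b * star (x l m b')) := by
  have e : ∀ ω, M.U n b ω * star (M.U n b' ω) =
      ∑ l, ∑ m, x l m b * (M.ch l m n ω * star (M.U n b' ω)) := by
    intro ω
    rw [show M.U n b ω = ∑ l, ∑ m, M.ch l m n ω * x l m b from rfl]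
    simp only [Finset.sum_mul]
    congr! 2
    ring
  simp only [e]
  rw [integral_finsetSum _ fun l' _ => integrable_finsetSum _ fun m' _ =>
    (l2_int (M.ch_memLp l' m' n) (M.U_memLp n b')).const_mul _]
  congr! 2 with l
  rw [integral_finsetSum _ fun m' _ =>
    (l2_int (M.ch_memLp l m' n) (M.U_memLp n b')).const_mul _]
  congr! 2 with m
  rw [integral_const_mul, M.chU hlam]
  ring

end moments
end MIMOModel

namespace MIMOModel

section cov

variable {Ω : Type*} [MeasureSpace Ω] [IsProbabilityMeasure (ℙ : Measure Ω)]
  {N B L K : ℕ} {lam : Fin L → Fin K → ℝ}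
  {σ2 ξ κ δ : ℝ} {x : Fin L → Fin K → Fin B → ℂ}

variable (M : MIMOModel Ω N B L K lam σ2 ξ κ δ x)

def Ps : Set (Idx N L K) := {i | ∃ p, i = Sum.inr (Sum.inl p)}
def Zs : Set (Idx N L K) := {i | ∃ p, i = Sum.inr (Sum.inr (Sum.inl p))}
def Es : Set (Idx N L K) := {i | ∃ p, i = Sum.inr (Sum.inr (Sum.inr p))}

lemma zz {n s} {g : Ω → ℂ} (hg : Measurable[M.sg Zsᶜ] g) :
    ∫ ω, g ω * star (M.z n s ω) = 0 := by
  simp only [mul_comm (g _)]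
  rw [M.int_mul Zs (star_m (M.z_sg (by simp [Zs]) (by simp [Zs]))) hg, int_star, z_mean]
  simp

lemma ee {n s} {g : Ω → ℂ} (hg : Measurable[M.sg Esᶜ] g) :
    ∫ ω, g ω * star (M.eta n s ω) = 0 := by
  simp only [mul_comm (g _)]
  rw [M.int_mul Es (star_m (M.eta_sg (by simp [Es]) (by simp [Es]))) hg, int_star, eta_mean]
  simp

lemma zz' {n s} {f g : Ω → ℂ} (hf : Measurable[M.sg Zsᶜ] f) (hg : Measurable[M.sg Zsᶜ] g) :
    ∫ ω, f ω * star (g ω * M.z n s ω) = 0 := by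
  refine Eq.trans ?_ (M.zz (n := n) (s := s) (hf.mul (star_m hg)))
  congr 1
  ext ω
  simp only [star_mul, Pi.mul_apply]
  ring

lemma swap0 {f g : Ω → ℂ} (h : ∫ ω, f ω * star (g ω) = 0) : ∫ ω, g ω * star (f ω) = 0 := by
  have : ∀ ω, g ω * star (f ω) = star (f ω * star (g ω)) := by
    intro ω; rw [star_mul, star_star]
  simp only [this]
  rw [int_star, h, star_zero]

lemma int_add3 {f g h : Ω → ℂ} (hf : Integrable f) (hg : Integrable g) (hh : Integrable h) :
    Integrable (fun ω => f ω + g ω + h ω) ∧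
    ∫ ω, (f ω + g ω + h ω) = (∫ ω, f ω) + (∫ ω, g ω) + ∫ ω, h ω := by
  have h1 : Integrable (fun ω => f ω + g ω) := hf.add hg
  exact ⟨h1.add hh, by rw [integral_add h1 hh, integral_add hf hg]⟩

lemma y_memLp (n b) : MemLp (M.y n b) 2 (ℙ : Measure Ω) :=
  ((M.ph_mul_memLp (M.U_memLp n b) n (b+1)).add (M.Rz_memLp n b (b+1))).add (M.eta_memLp n (b+1))

lemma s_cov (hlam : ∀ l k, 0 < lam l k) (hδ : 0 ≤ δ) (n : Fin N) (b b' : Fin B) :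
    ∫ ω, (M.ph n (b+1) ω * M.U n b ω) * star (M.ph n (b'+1) ω * M.U n b' ω) =
    (Real.exp (-(δ / 2) * |((b : ℕ) : ℝ) - (b' : ℕ)|) : ℂ) *
      ∑ l, ∑ m, lam l m * (x l m b * star (x l m b')) := by
  have e : ∀ ω, (M.ph n (b+1) ω * M.U n b ω) * star (M.ph n (b'+1) ω * M.U n b' ω) =
     (M.ph n (b+1) ω * star (M.ph n (b'+1) ω)) * (M.U n b ω * star (M.U n b' ω)) := by
    intro ω; rw [star_mul]; ring
  simp only [e]
  rw [M.int_mul Ps, M.UU hlam, M.ph_cov hδ]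
  · push_cast; ring_nf
  · exact (M.ph_sg (by simp [Ps])).mul (star_m (M.ph_sg (by simp [Ps])))
  · exact (M.U_sg (by simp [Ps])).mul (star_m (M.U_sg (by simp [Ps])))

lemma d_cov (hlam : ∀ l k, 0 < lam l k) (n : Fin N) (b b' : Fin B) :
    ∫ ω, ((κ : ℂ) * (M.R n b ω : ℂ) * M.z n (b+1) ω) *
      star ((κ : ℂ) * (M.R n b' ω : ℂ) * M.z n (b'+1) ω) =
    if b = b' then (κ : ℂ) ^ 2 * ∑ l, ∑ m, (Complex.normSq (x l m b) : ℂ) * lam l m else 0 := by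
  have e : ∀ ω, ((κ : ℂ) * (M.R n b ω : ℂ) * M.z n (b+1) ω) *
      star ((κ : ℂ) * (M.R n b' ω : ℂ) * M.z n (b'+1) ω) =
     ((κ : ℂ) ^ 2 * ((M.R n b ω * M.R n b' ω : ℝ) : ℂ)) *
       (M.z n (b+1) ω * star (M.z n (b'+1) ω)) := by
    intro ω
    simp only [star_mul, Complex.star_def, Complex.conj_ofReal]
    push_cast
    ring
  simp only [e]
  rw [M.int_mul Hs, M.z_cov]
  · by_cases h : b = b'
    · subst h
      rw [integral_const_mul, integral_complex_ofReal, M.RR_mean hlam]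
      simp
    · have : ¬ ((b : ℕ) + 1 = b' + 1) := by
        intro h'; exact h (Fin.ext (by omega))
      rw [if_neg h, if_neg this, mul_zero]
  · exact measurable_const.mul (ofReal_m ((M.R_sg (by simp [Hs])).mul (M.R_sg (by simp [Hs]))))
  · exact (M.z_sg (by simp [Hs]) (by simp [Hs])).mul
      (star_m (M.z_sg (by simp [Hs]) (by simp [Hs])))

lemma y_cov (hlam : ∀ l k, 0 < lam l k) (hδ : 0 ≤ δ) (hs : 0 ≤ σ2 * ξ) (n : Fin N) (b b' : Fin B) :
    ∫ ω, M.y n b ω * star (M.y n b' ω) = PsiMat lam σ2 ξ κ δ x b b' := by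
  set s : Fin B → Ω → ℂ := fun b ω => M.ph n (b+1) ω * M.U n b ω with hsd
  set d : Fin B → Ω → ℂ := fun b ω => (κ : ℂ) * (M.R n b ω : ℂ) * M.z n (b+1) ω with hdd
  set e : Fin B → Ω → ℂ := fun b ω => M.eta n (b+1) ω with hed
  have Ls : ∀ b, MemLp (s b) 2 (ℙ : Measure Ω) := fun b => M.ph_mul_memLp (M.U_memLp n b) n (b+1)
  have Ld : ∀ b, MemLp (d b) 2 (ℙ : Measure Ω) := fun b => M.Rz_memLp n b (b+1)
  have Le : ∀ b, MemLp (e b) 2 (ℙ : Measure Ω) := fun b => M.eta_memLp n (b+1)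
  have sd : ∀ b b', ∫ ω, s b ω * star (d b' ω) = 0 := fun b b' =>
    M.zz' ((M.ph_sg (by simp [Zs])).mul (M.U_sg (by simp [Zs])))
      (measurable_const.mul (ofReal_m (M.R_sg (by simp [Zs]))))
  have se : ∀ b b', ∫ ω, s b ω * star (e b' ω) = 0 := fun b b' =>
    M.ee ((M.ph_sg (by simp [Es])).mul (M.U_sg (by simp [Es])))
  have de : ∀ b b', ∫ ω, d b ω * star (e b' ω) = 0 := fun b b' =>
    M.ee ((measurable_const.mul (ofReal_m (M.R_sg (by simp [Es])))).mul
      (M.z_sg (by simp [Es]) (by simp [Es])))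
  have E : ∀ ω, M.y n b ω * star (M.y n b' ω) =
      (s b ω * star (s b' ω) + s b ω * star (d b' ω) + s b ω * star (e b' ω))
      + (d b ω * star (s b' ω) + d b ω * star (d b' ω) + d b ω * star (e b' ω))
      + (e b ω * star (s b' ω) + e b ω * star (d b' ω) + e b ω * star (e b' ω)) := by
    intro ω
    have : ∀ b, M.y n b ω = s b ω + d b ω + e b ω := fun b => rfl
    simp only [this, star_add]
    ring
  simp only [E]
  have i1 := l2_int (Ls b) (Ls b')
  have i2 := l2_int (Ls b) (Ld b')
  have i3 := l2_int (Ls b) (Le b')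
  have i4 := l2_int (Ld b) (Ls b')
  have i5 := l2_int (Ld b) (Ld b')
  have i6 := l2_int (Ld b) (Le b')
  have i7 := l2_int (Le b) (Ls b')
  have i8 := l2_int (Le b) (Ld b')
  have i9 := l2_int (Le b) (Le b')
  have a1 := int_add3 i1 i2 i3
  have a2 := int_add3 i4 i5 i6
  have a3 := int_add3 i7 i8 i9
  rw [(int_add3 a1.1 a2.1 a3.1).2, a1.2, a2.2, a3.2, sd, se, de, swap0 (sd b' b), swap0 (se b' b), swap0 (de b' b)]
  rw [show ∫ ω, s b ω * star (s b' ω) = _ from M.s_cov hlam hδ n b b',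
    show ∫ ω, d b ω * star (d b' ω) = _ from M.d_cov hlam n b b',
    show ∫ ω, e b ω * star (e b' ω) = _ from M.eta_cov hs n _ _]
  simp only [PsiMat, Matrix.add_apply, Matrix.sum_apply, Matrix.smul_apply, smul_eq_mul, Xmat,
    Matrix.of_apply, Matrix.one_apply]
  by_cases h : b = b'
  · subst h
    simp only [mul_star_eq, Finset.mul_sum, if_true, sub_self, abs_zero, mul_zero, Real.exp_zero]
    simp only [add_zero, zero_add, mul_one]
    congr 1
    rw [Complex.ofReal_one]
    simp only [← Finset.sum_add_distrib]
    congr! 2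
    push_cast
    ring
  · have : ¬ ((b : ℕ) + 1 = b' + 1) := by
      intro h'; exact h (Fin.ext (by omega))
    simp only [h, this, if_false, Finset.mul_sum, add_zero, mul_zero]
    congr! 2
    ring

lemma yh_cov (hlam : ∀ l k, 0 < lam l k) (hδ : 0 ≤ δ) (n : Fin N) (b : Fin B) (t : ℕ) (ht : B < t)
    (j k) :
    ∫ ω, M.hEff j k t n ω * star (M.y n b ω) =
      lam j k * star (x j k b) * (Real.exp (-(δ / 2) * ((t : ℝ) - ((b : ℕ) + 1))) : ℂ) := by
  set s : Fin B → Ω → ℂ := fun b ω => M.ph n (b+1) ω * M.U n b ω with hsd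
  set d : Fin B → Ω → ℂ := fun b ω => (κ : ℂ) * (M.R n b ω : ℂ) * M.z n (b+1) ω with hdd
  set e : Fin B → Ω → ℂ := fun b ω => M.eta n (b+1) ω with hed
  set h : Ω → ℂ := fun ω => M.ph n t ω * M.ch j k n ω
  have Ls : ∀ b, MemLp (s b) 2 (ℙ : Measure Ω) := fun b => M.ph_mul_memLp (M.U_memLp n b) n (b+1)
  have Ld : ∀ b, MemLp (d b) 2 (ℙ : Measure Ω) := fun b => M.Rz_memLp n b (b+1)
  have Le : ∀ b, MemLp (e b) 2 (ℙ : Measure Ω) := fun b => M.eta_memLp n (b+1)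
  have Lh : MemLp h 2 (ℙ : Measure Ω) := M.ph_mul_memLp (M.ch_memLp j k n) n t
  have sd : ∫ ω, h ω * star (d b ω) = 0 := 
    M.zz' ((M.ph_sg (by simp [Zs])).mul (M.ch_sg' (by simp [Zs])))
      (measurable_const.mul (ofReal_m (M.R_sg (by simp [Zs]))))
  have se : ∫ ω, h ω * star (e b ω) = 0 :=
    M.ee ((M.ph_sg (by simp [Es])).mul (M.ch_sg' (by simp [Es])))
  have E : ∀ ω, M.hEff j k t n ω * star (M.y n b ω) =
      h ω * star (s b ω) + h ω * star (d b ω) + h ω * star (e b ω) := by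
    intro ω
    have : M.y n b ω = s b ω + d b ω + e b ω := rfl
    have h' : M.hEff j k t n ω = h ω := rfl
    simp only [this, h', star_add]
    ring
  simp only [E]
  have i1 := l2_int Lh (Ls b)
  have i2 := l2_int Lh (Ld b)
  have i3 := l2_int Lh (Le b)
  rw [(int_add3 i1 i2 i3).2, sd, se]
  have e1 : ∀ ω, h ω * star (s b ω) =
     (M.ph n t ω * star (M.ph n (b+1) ω)) * (M.ch j k n ω * star (M.U n b ω)) := by
    intro ω; simp only [h, s]; rw [star_mul]; ring
  simp only [e1]
  rw [M.int_mul Ps, M.chU hlam, M.ph_cov hδ]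
  · have : ((b : ℕ) : ℝ) + 1 ≤ t := by
      have := b.2
      exact_mod_cast (by omega : (b : ℕ) + 1 ≤ t)
    rw [abs_of_nonneg (by push_cast; linarith)]
    push_cast
    ring
  · exact (M.ph_sg (by simp [Ps])).mul (star_m (M.ph_sg (by simp [Ps])))
  · exact (M.ch_sg' (by simp [Ps])).mul (star_m (M.U_sg (by simp [Ps])))

end cov
end MIMOModel

lemma PsiMat_herm {B L K : ℕ} (lam : Fin L → Fin K → ℝ) (σ2 ξ κ δ : ℝ)
    (x : Fin L → Fin K → Fin B → ℂ) : (PsiMat lam σ2 ξ κ δ x)ᴴ = PsiMat lam σ2 ξ κ δ x := by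
  have hX : ∀ v : Fin B → ℂ, (Xmat κ δ v)ᴴ = Xmat κ δ v := by
    intro v
    ext a b
    simp only [Xmat, Matrix.conjTranspose_apply, Matrix.of_apply]
    by_cases h : a = b
    · subst h
      simp only [if_true, Complex.star_def, Complex.conj_ofReal]
    · rw [if_neg h, if_neg (Ne.symm h), abs_sub_comm]
      simp only [star_mul, star_star, Complex.star_def, Complex.conj_ofReal]
      simp
      ring
  simp only [PsiMat, Matrix.conjTranspose_add, Matrix.conjTranspose_sum, Matrix.conjTranspose_smul,
    hX, Matrix.conjTranspose_one, Complex.star_def, Complex.conj_ofReal]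

lemma inv_mul_self_inv {B : ℕ} (A : Matrix (Fin B) (Fin B) ℂ) : A⁻¹ * A * A⁻¹ = A⁻¹ := by
  by_cases h : IsUnit A.det
  · rw [Matrix.nonsing_inv_mul _ h, one_mul]
  · rw [Matrix.nonsing_inv_apply_not_isUnit _ h]; simp

/-- **First moment of the MRC filter output (Theorem 2, eq. (10)).** With the MRC filter
`v_{jk}(t) = ĥ_{jjk}(t)`,
`E[v_{jk}(t)ᴴ h_{jjk}(t)] = E[‖v_{jk}(t)‖²] = N λ_{jjk}² x̃_{jk}ᴴ D_{δ(t)} Ψ_j⁻¹ D_{δ(t)}ᴴ x̃_{jk}`;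
in particular this expectation is real and nonnegative. -/
theorem mrc_first_moment
    {Ω : Type*} [MeasureSpace Ω] [IsProbabilityMeasure (ℙ : Measure Ω)]
    {N B L K : ℕ} {lam : Fin L → Fin K → ℝ} {σ2 ξ κ δ : ℝ}
    {x : Fin L → Fin K → Fin B → ℂ}
    (M : MIMOModel Ω N B L K lam σ2 ξ κ δ x)
    (hlam : ∀ l k, 0 < lam l k) (hσ2 : 0 < σ2) (hξ : 1 ≤ ξ) (hκ : 0 ≤ κ) (hδ : 0 ≤ δ)
    (t : ℕ) (ht : B < t) (j : Fin L) :
    ∀ k : Fin K,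
      ((∫ ω, ∑ n, star (M.hHat j k t n ω) * M.hEff j k t n ω)
          = ((∫ ω, ∑ n, Complex.normSq (M.hHat j k t n ω) : ℝ) : ℂ)) ∧
      ((∫ ω, ∑ n, star (M.hHat j k t n ω) * M.hEff j k t n ω)
          = (N : ℂ) * ((lam j k : ℝ) : ℂ) ^ 2
            * (star (x j k) ⬝ᵥ (Dmat δ t B * (PsiMat lam σ2 ξ κ δ x)⁻¹
                * (Dmat δ t B)ᴴ).mulVec (x j k))) ∧
      (∫ ω, ∑ n, star (M.hHat j k t n ω) * M.hEff j k t n ω).im = 0 ∧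
      0 ≤ (∫ ω, ∑ n, star (M.hHat j k t n ω) * M.hEff j k t n ω).re := by
  intro k
  have hs : 0 ≤ σ2 * ξ := by positivity
  set G := (PsiMat lam σ2 ξ κ δ x)⁻¹ with hG
  set D := Dmat δ t B with hD
  set c := Matrix.vecMul (star (x j k)) (D * G) with hc
  set Q := star (x j k) ⬝ᵥ (D * G * Dᴴ).mulVec (x j k) with hQ
  have hGh : Gᴴ = G := by rw [hG, Matrix.conjTranspose_nonsing_inv, PsiMat_herm]
  have hQs : star Q = Q := by
    rw [hQ, ← Matrix.star_dotProduct, Matrix.star_mulVec, ← Matrix.dotProduct_mulVec]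
    simp only [Matrix.conjTranspose_mul, Matrix.conjTranspose_conjTranspose, hGh, Matrix.mul_assoc]
  have hhat : ∀ n ω, M.hHat j k t n ω = lam j k * ∑ b, c b * M.y n b ω := fun n ω => rfl
  have hL : ∀ n, MemLp (M.hHat j k t n) 2 (ℙ : Measure Ω) := by
    intro n
    have : MemLp (fun ω => ∑ b, c b * M.y n b ω) 2 (ℙ : Measure Ω) :=
      memLp_finsetSum _ fun b _ => (M.y_memLp n b).const_mul _
    exact this.const_mul _
  have hE : ∀ n, MemLp (M.hEff j k t n) 2 (ℙ : Measure Ω) := fun n =>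
    M.ph_mul_memLp (M.ch_memLp j k n) n t
  have f1 : ∀ n, ∫ ω, star (M.hHat j k t n ω) * M.hEff j k t n ω = (lam j k : ℂ) ^ 2 * Q := by
    intro n
    have e : ∀ ω, star (M.hHat j k t n ω) * M.hEff j k t n ω =
        ∑ b, (lam j k * star (c b)) * (M.hEff j k t n ω * star (M.y n b ω)) := by
      intro ω
      rw [hhat]
      simp only [star_mul, star_sum, Finset.mul_sum, Finset.sum_mul, Complex.star_def,
        Complex.conj_ofReal]
      congr! 1
      ring
    simp only [e]
    rw [integral_finsetSum _ fun b _ => (MIMOModel.l2_int (hE n) (M.y_memLp n b)).const_mul _]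
    simp only [integral_const_mul, M.yh_cov hlam hδ n _ t ht j k]
    rw [← hQs]
    have : Q = ∑ b, c b * ((Real.exp (-(δ / 2) * ((t : ℝ) - ((b : ℕ) + 1))) : ℂ) * x j k b) := by
      rw [hQ, ← Matrix.mulVec_mulVec, Matrix.dotProduct_mulVec, ← hc]
      simp only [dotProduct]
      congr! 2
      simp only [hD, Dmat, Matrix.diagonal_conjTranspose, Matrix.mulVec_diagonal, Pi.star_apply,
        Complex.star_def, Complex.conj_ofReal]
    rw [this]
    simp only [star_mul, star_sum, Finset.mul_sum, Complex.star_def,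
        Complex.conj_ofReal]
    congr! 1
    ring
  have f2 : ∀ n, ((∫ ω, Complex.normSq (M.hHat j k t n ω) : ℝ) : ℂ) = (lam j k : ℂ) ^ 2 * Q := by
    intro n
    rw [← integral_complex_ofReal]
    have e : ∀ ω, (Complex.normSq (M.hHat j k t n ω) : ℂ) =
        ∑ b, ∑ b', ((lam j k : ℂ) ^ 2 * (c b * star (c b'))) * (M.y n b ω * star (M.y n b' ω)) := by
      intro ω
      rw [← MIMOModel.mul_star_eq, hhat]
      simp only [star_mul, star_sum, Finset.mul_sum, Finset.sum_mul, Complex.star_def,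
        Complex.conj_ofReal]
      rw [Finset.sum_comm]
      congr! 2
      ring
    simp only [e]
    have hi : ∀ b b', Integrable (fun ω => ((lam j k : ℂ) ^ 2 * (c b * star (c b'))) *
        (M.y n b ω * star (M.y n b' ω))) := fun b b' =>
      (MIMOModel.l2_int (M.y_memLp n b) (M.y_memLp n b')).const_mul _
    rw [integral_finsetSum _ fun b _ => integrable_finsetSum _ fun b' _ => hi b b']
    simp only [integral_finsetSum _ fun b' _ => hi _ b', integral_const_mul,
      M.y_cov hlam hδ hs n]
    have : Q = c ⬝ᵥ (PsiMat lam σ2 ξ κ δ x).mulVec (star c) := by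
      have hsc : star c = (G * Dᴴ).mulVec (x j k) := by
        rw [hc, Matrix.star_vecMul, star_star, Matrix.conjTranspose_mul, hGh]
      rw [hsc, hc, ← Matrix.dotProduct_mulVec, Matrix.mulVec_mulVec, Matrix.mulVec_mulVec, hQ]
      congr 2
      have := inv_mul_self_inv (PsiMat lam σ2 ξ κ δ x)
      rw [← hG] at this
      conv_lhs => rw [← this]
      simp only [Matrix.mul_assoc]
    rw [this]
    simp only [dotProduct, Matrix.mulVec, Finset.mul_sum, Pi.star_apply]
    congr! 2
    ring
  have g1 : ∫ ω, ∑ n, star (M.hHat j k t n ω) * M.hEff j k t n ω = N * (lam j k : ℂ) ^ 2 * Q := by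
    rw [integral_finsetSum _ fun n _ => by
      simpa only [mul_comm] using MIMOModel.l2_int (hE n) (hL n)]
    simp only [f1]
    simp [mul_assoc]
  have g2 : ((∫ ω, ∑ n, Complex.normSq (M.hHat j k t n ω) : ℝ) : ℂ) = N * (lam j k : ℂ) ^ 2 * Q := by
    rw [integral_finsetSum _ fun n _ => MIMOModel.normSq_int (hL n), Complex.ofReal_sum]
    simp only [f2]
    simp [mul_assoc]
  have g3 := g1.trans g2.symm
  refine ⟨g3, g1, ?_, ?_⟩
  · rw [g3, Complex.ofReal_im]
  · rw [g3, Complex.ofReal_re]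
    exact integral_nonneg fun ω => Finset.sum_nonneg fun n _ => Complex.normSq_nonneg _
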